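/- arXiv:1011.6551 — 2 statements merged into one kernel-verified Lean document; each statement's English description precedes it below -/
import Mathlib

section
/- Let F be the free group on two generators x and y, let k ≥ 2 be an integer, let c = (xy)^k x, and let S be the subgroup of F generated by xy, yx and c². Then S ∩ ⟨c⟩ = ⟨c²⟩, where ⟨c⟩ and ⟨c²⟩ denote the cyclic subgroups generated by c and c² respectively. -/
/-! Word length modulo 2 is a homomorphism from the free group to `ℤ/2`. It kills the three
generators of `S`, but not `c`, whose length `2k + 1` is odd; so `c ^ n ∈ S` forces `n` to be
even. Conversely, `c ^ 2` is one of the generators of `S`. -/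

/-- In the free group on `x, y`, with `c = (xy)^k x` and `S = ⟨xy, yx, c²⟩`,
one has `S ∩ ⟨c⟩ = ⟨c²⟩`. -/
theorem subgroup_inter_zpowers (k : ℕ) (hk : 2 ≤ k) :
    (Subgroup.closure {FreeGroup.of 0 * FreeGroup.of 1, FreeGroup.of 1 * FreeGroup.of 0,
        ((FreeGroup.of 0 * FreeGroup.of 1) ^ k * FreeGroup.of 0) ^ 2} ⊓
      Subgroup.zpowers ((FreeGroup.of 0 * FreeGroup.of 1) ^ k * FreeGroup.of (0 : Fin 2))) =
    Subgroup.zpowers (((FreeGroup.of 0 * FreeGroup.of 1) ^ k * FreeGroup.of (0 : Fin 2)) ^ 2) := by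
  -- The parity of the word length, valued in `ℤ/2`.
  let φ : FreeGroup (Fin 2) →* Multiplicative (ZMod 2) :=
    FreeGroup.lift fun _ => Multiplicative.ofAdd 1
  have hsq : ∀ a : Multiplicative (ZMod 2), a * a = 1 := by decide
  have hφ : ∀ i, φ (FreeGroup.of i) = Multiplicative.ofAdd 1 := fun i => by simp [φ]
  have hc : φ ((FreeGroup.of 0 * FreeGroup.of 1) ^ k * FreeGroup.of 0) =
      Multiplicative.ofAdd 1 := by
    rw [map_mul, map_pow, map_mul, hφ, hφ, hsq, one_pow, one_mul]
  apply le_antisymm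
  · rintro _ ⟨hS, n, rfl⟩
    have hker : Subgroup.closure {FreeGroup.of 0 * FreeGroup.of 1,
        FreeGroup.of 1 * FreeGroup.of 0,
        ((FreeGroup.of 0 * FreeGroup.of 1) ^ k * FreeGroup.of (0 : Fin 2)) ^ 2} ≤ φ.ker := by
      rw [Subgroup.closure_le]
      rintro _ (rfl | rfl | rfl) <;> simp only [SetLike.mem_coe, MonoidHom.mem_ker]
      · rw [map_mul, hφ, hφ, hsq]
      · rw [map_mul, hφ, hφ, hsq]
      · rw [map_pow, pow_two, hsq]
    have h := hker hS
    simp only [MonoidHom.mem_ker, map_zpow, hc] at h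
    have h0 : (n : ZMod 2) = 0 := by
      have := congrArg Multiplicative.toAdd h
      simpa using this
    obtain ⟨m, rfl⟩ := (ZMod.intCast_zmod_eq_zero_iff_dvd n 2).mp h0
    exact ⟨m, by simp only [zpow_mul]; rfl⟩
  · rw [Subgroup.zpowers_le]
    exact ⟨Subgroup.subset_closure (by simp), 2, by norm_cast⟩
end

section
/- Let F be the free group on two generators x and y, let k ≥ 2 be an integer, let c = (xy)^k x, and let S be the subgroup of F generated by xy, yx and c². Then the centralizer of c² in S equals the cyclic subgroup generated by c², i.e. C_S(c²) = {s ∈ S : s c² = c² s} = ⟨c²⟩. -/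
/-!
Put `a = xy` and `c = (xy)^k x`. Since `x = a^(-k) c` and `y = c⁻¹ a^(k+1)`, the pair `(c, a)` is again
a basis of the free group, so the centralizer of `c²` can be computed after moving `c` to a free
generator `t`. A reduced word commuting with `t²` is a power of `t`: strip its initial letters `t^(±1)`;
if a letter remained, the two words `t t w` and `w t t` would both be reduced and hence equal,
although they start with different letters (`mem_zpowers_of_commute_sq`). Thus the centralizer of `c²`
in the whole group is `⟨c⟩`. Finally every element of `S` has even exponent sum, while `c` has odd
exponent sum `2k + 1`, so only even powers of `c` lie in `S`.
-/

open FreeGroup in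
/-- The word form of: the centralizer of the square of a free generator `t = of 0` is `⟨t⟩`. -/
lemma mem_zpowers_of_commute_sq_word (L : List (Fin 2 × Bool)) (hL : IsReduced L)
    (h : mk L * of 0 ^ 2 = of 0 ^ 2 * mk L) :
    mk L ∈ Subgroup.zpowers (of (0 : Fin 2)) := by
  induction L with
  | nil => exact one_mem _
  | cons p L ih =>
    obtain ⟨i, b⟩ := p
    have hL' : IsReduced L := hL.of_cons
    have hsplit : mk ((i, b) :: L) = mk [(i, b)] * mk L := by simp [mul_mk]
    by_cases hi : i = 0
    · subst hi
      have hb : mk [((0 : Fin 2), b)] ∈ Subgroup.zpowers (of (0 : Fin 2)) := by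
        cases b
        · exact inv_mem (Subgroup.mem_zpowers (of (0 : Fin 2)))
        · exact Subgroup.mem_zpowers _
      have hc : mk [((0 : Fin 2), b)] * of 0 ^ 2 = of 0 ^ 2 * mk [((0 : Fin 2), b)] := by
        obtain ⟨n, hn⟩ := Subgroup.mem_zpowers_iff.mp hb
        rw [← hn]
        exact ((Commute.refl (of (0 : Fin 2))).zpow_left n).pow_right 2
      rw [hsplit] at h ⊢
      refine mul_mem hb (ih hL' ?_)
      apply mul_left_cancel (a := mk [((0 : Fin 2), b)])
      rw [← mul_assoc, h, ← mul_assoc, ← hc, mul_assoc]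
    · exfalso
      have hsq : of (0 : Fin 2) ^ 2 = mk [(0, true), (0, true)] := by
        simp [pow_two, of, mul_mk]
      rw [hsq, mul_mk, mul_mk] at h
      have hred : IsReduced ([((0 : Fin 2), true), (0, true)] ++ (i, b) :: L) := by
        simp only [List.cons_append, List.nil_append, isReduced_cons_cons]
        exact ⟨fun _ => trivial, fun h0 => absurd h0.symm hi, hL⟩
      have hw := congrArg toWord h
      rw [toWord_mk, toWord_mk, hred.reduce_eq] at hw
      -- `w t t` reduces to the reduced word `t t w` of the same length, so no cancellation occurs.
      have hsub := (reduce.red (L := ((i, b) :: L) ++ [((0 : Fin 2), true), (0, true)])).sublist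
      have heq := hsub.eq_of_length (by rw [hw]; simp)
      rw [hw] at heq
      simp only [List.cons_append, List.cons.injEq, Prod.mk.injEq] at heq
      exact hi heq.1.1.symm

lemma mem_zpowers_of_commute_sq (g : FreeGroup (Fin 2))
    (h : g * FreeGroup.of 0 ^ 2 = FreeGroup.of 0 ^ 2 * g) :
    g ∈ Subgroup.zpowers (FreeGroup.of (0 : Fin 2)) := by
  have := mem_zpowers_of_commute_sq_word g.toWord FreeGroup.isReduced_toWord
  rw [FreeGroup.mk_toWord] at this
  exact this h

/-- The centralizer of `c²` in the whole free group is `⟨c⟩`, by the change of basis `(c, xy)`. -/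
lemma mem_zpowers_of_commute_c_sq (k : ℕ) (s : FreeGroup (Fin 2))
    (h : s * ((FreeGroup.of 0 * FreeGroup.of 1) ^ k * FreeGroup.of (0 : Fin 2)) ^ 2 =
          ((FreeGroup.of 0 * FreeGroup.of 1) ^ k * FreeGroup.of (0 : Fin 2)) ^ 2 * s) :
    s ∈ Subgroup.zpowers ((FreeGroup.of 0 * FreeGroup.of 1) ^ k * FreeGroup.of (0 : Fin 2)) := by
  set x := FreeGroup.of (0 : Fin 2) with hx
  set y := FreeGroup.of (1 : Fin 2) with hy
  -- `ψ` sends `c` to `x` and `xy` to `y`; `φ` is its inverse.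
  let ψ : FreeGroup (Fin 2) →* FreeGroup (Fin 2) :=
    FreeGroup.lift ![(y ^ k)⁻¹ * x, x⁻¹ * y ^ (k + 1)]
  let φ : FreeGroup (Fin 2) →* FreeGroup (Fin 2) := FreeGroup.lift ![(x * y) ^ k * x, x * y]
  have ψx : ψ x = (y ^ k)⁻¹ * x := by simp [ψ, hx]
  have ψy : ψ y = x⁻¹ * y ^ (k + 1) := by simp [ψ, hy]
  have φx : φ x = (x * y) ^ k * x := by simp [φ, hx]
  have φy : φ y = x * y := by simp [φ, hy]
  have hφψ : φ.comp ψ = MonoidHom.id _ := by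
    ext i
    fin_cases i
    · change φ (ψ x) = x
      simp only [ψx, map_mul, map_inv, map_pow, φx, φy]
      group
    · change φ (ψ y) = y
      simp only [ψy, map_mul, map_inv, map_pow, φx, φy, pow_succ, mul_inv_rev]
      group
  have hψc : ψ ((x * y) ^ k * x) = x := by
    have hxy : ψ (x * y) = y := by
      rw [map_mul, ψx, ψy, pow_succ]
      group
    rw [map_mul, map_pow, hxy, ψx, mul_inv_cancel_left]
  have h' := congrArg ψ h
  rw [map_mul, map_mul, map_pow, hψc] at h'
  obtain ⟨n, hn⟩ := Subgroup.mem_zpowers_iff.mp (mem_zpowers_of_commute_sq _ h')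
  refine Subgroup.mem_zpowers_iff.mpr ⟨n, ?_⟩
  have hs : φ (ψ s) = s := DFunLike.congr_fun hφψ s
  rw [← hs, ← hn, map_zpow, ← hx, φx]


/-- In the free group on `x, y`, with `c = (xy)^k x` and `S = ⟨xy, yx, c²⟩`,
the centralizer of `c²` in `S` is the cyclic subgroup generated by `c²`. -/
theorem centralizer_in_S_eq_zpowers (k : ℕ) (hk : 2 ≤ k) :
    ∀ s : FreeGroup (Fin 2),
      (s ∈ Subgroup.closure {FreeGroup.of 0 * FreeGroup.of 1,
          FreeGroup.of 1 * FreeGroup.of 0,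
          ((FreeGroup.of 0 * FreeGroup.of 1) ^ k * FreeGroup.of 0) ^ 2} ∧
        s * ((FreeGroup.of 0 * FreeGroup.of 1) ^ k * FreeGroup.of (0 : Fin 2)) ^ 2 =
          ((FreeGroup.of 0 * FreeGroup.of 1) ^ k * FreeGroup.of (0 : Fin 2)) ^ 2 * s) ↔
      s ∈ Subgroup.zpowers
        (((FreeGroup.of 0 * FreeGroup.of 1) ^ k * FreeGroup.of (0 : Fin 2)) ^ 2) := by
  intro s
  constructor
  · rintro ⟨hS, hc⟩
    obtain ⟨n, rfl⟩ := Subgroup.mem_zpowers_iff.mp (mem_zpowers_of_commute_c_sq k s hc)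
    -- The exponent sum modulo 2.
    let ε : FreeGroup (Fin 2) →* Multiplicative (ZMod 2) :=
      FreeGroup.lift fun _ => Multiplicative.ofAdd 1
    have hsq : ∀ z : Multiplicative (ZMod 2), z ^ 2 = 1 := by decide
    have hgen : ∀ i, ε (FreeGroup.of i) = Multiplicative.ofAdd 1 := fun i => by simp [ε]
    have hle := (Subgroup.closure_le (K := ε.ker) (k := {FreeGroup.of 0 * FreeGroup.of 1,
          FreeGroup.of 1 * FreeGroup.of 0,
          ((FreeGroup.of 0 * FreeGroup.of 1) ^ k * FreeGroup.of 0) ^ 2})).mpr (by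
      rintro g (rfl | rfl | rfl)
      · simp only [SetLike.mem_coe, MonoidHom.mem_ker, map_mul, hgen]; decide
      · simp only [SetLike.mem_coe, MonoidHom.mem_ker, map_mul, hgen]; decide
      · simp only [SetLike.mem_coe, MonoidHom.mem_ker, map_pow, hsq])
    have hε := MonoidHom.mem_ker.mp (hle hS)
    have hone : (Multiplicative.ofAdd 1 : Multiplicative (ZMod 2)) * Multiplicative.ofAdd 1 = 1 := by
      decide
    rw [map_zpow, map_mul, map_pow, map_mul, hgen, hgen, hone, one_pow, one_mul] at hε
    have hn : ((n : ℤ) : ZMod 2) = 0 := by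
      have := congrArg Multiplicative.toAdd hε
      simpa using this
    obtain ⟨m, rfl⟩ := (ZMod.intCast_zmod_eq_zero_iff_dvd n 2).mp hn
    refine Subgroup.mem_zpowers_iff.mpr ⟨m, ?_⟩
    rw [← zpow_natCast, ← zpow_mul]
  · intro h
    obtain ⟨n, rfl⟩ := Subgroup.mem_zpowers_iff.mp h
    exact ⟨zpow_mem (Subgroup.subset_closure (by simp)) n, (Commute.refl _).zpow_left n⟩
end
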